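/- arXiv:1708.06554 — 4 statements merged into one kernel-verified Lean document; each statement's English description precedes it below -/
import Mathlib

section
/- Let 0 < q < 1 be real and let x be a real number. For every integer n ≥ 0, the Carlitz type q-Changhee polynomial value satisfies Ch_{n,q}(x) = (1+q) · Σ_{k=0}^{n} Σ_{l=0}^{k} (1/(1−q)^k) C(k,l) q^{l x} (−1)^l S₁(n,k) / (1 + q^{l+1}), where C(k,l) is the binomial coefficient. -/
/-- The `q`-analogue `[x]_q = (1 - q^x)/(1 - q)` (real exponent, via `rpow`). -/
noncomputable def qnum (q x : ℝ) : ℝ := (1 - q ^ x) / (1 - q)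

/-- Carlitz `q`-Euler polynomial value
`ℰ_{n,q}(x) = (1+q) ∑_{m=0}^∞ (-q)^m [m+x]_q^n`. -/
noncomputable def qEuler (q : ℝ) (n : ℕ) (x : ℝ) : ℝ :=
  (1 + q) * ∑' m : ℕ, (-q) ^ m * (qnum q ((m : ℝ) + x)) ^ n

/-- Signed Stirling numbers of the first kind, defined as the coefficients of the
falling factorial: `x(x-1)⋯(x-n+1) = ∑_{k=0}^n S₁(n,k) x^k`. -/
noncomputable def S1 (n k : ℕ) : ℤ := (descPochhammer ℤ n).coeff k

/-- Stirling numbers of the second kind, so that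
`x^n = ∑_{k=0}^n S₂(n,k) x(x-1)⋯(x-k+1)`. -/
def S2 : ℕ → ℕ → ℕ
  | 0, 0 => 1
  | 0, _ + 1 => 0
  | _ + 1, 0 => 0
  | n + 1, k + 1 => S2 n k + (k + 1) * S2 n (k + 1)

/-- Carlitz type `q`-Changhee polynomial value
`Ch_{n,q}(x) = ∑_{k=0}^n S₁(n,k) ℰ_{k,q}(x)`. -/
noncomputable def qChanghee (q : ℝ) (n : ℕ) (x : ℝ) : ℝ :=
  ∑ k ∈ Finset.range (n + 1), (S1 n k : ℝ) * qEuler q k x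

/-!
Expanding `[m + x]_q ^ k` by the binomial theorem turns the series for `ℰ_{k,q}(x)` into a finite
combination of geometric series in `m`, the `l`-th one having ratio `-q * q ^ l = -q ^ (l + 1)`.
-/

theorem hasSum_pow_mul_one_sub_mul_pow_pow {𝕜 : Type*} [NormedField 𝕜] {z a : 𝕜}
    (hz : ‖z‖ < 1) (ha : ‖a‖ ≤ 1) (b : 𝕜) (k : ℕ) :
    HasSum (fun m : ℕ ↦ z ^ m * (1 - b * a ^ m) ^ k)
      (∑ l ∈ Finset.range (k + 1), k.choose l * (-b) ^ l / (1 - z * a ^ l)) := by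
  have norm_ratio_lt_one (l : ℕ) : ‖z * a ^ l‖ < 1 := by
    rw [norm_mul, norm_pow]
    exact mul_lt_one_of_nonneg_of_lt_one_left (norm_nonneg z) hz
      (pow_le_one₀ (norm_nonneg a) ha)
  have hasSum_expansion : HasSum
      (fun m : ℕ ↦ ∑ l ∈ Finset.range (k + 1), k.choose l * (-b) ^ l * (z * a ^ l) ^ m)
      (∑ l ∈ Finset.range (k + 1), k.choose l * (-b) ^ l / (1 - z * a ^ l)) := by
    simp only [div_eq_mul_inv]
    exact hasSum_sum fun l _ ↦
      (hasSum_geometric_of_norm_lt_one (norm_ratio_lt_one l)).mul_left _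
  refine hasSum_expansion.congr_fun fun m ↦ ?_
  rw [sub_eq_neg_add, add_pow, Finset.mul_sum]
  refine Finset.sum_congr rfl fun l _ ↦ ?_
  ring

theorem qnum_natCast_add {q : ℝ} (hq : 0 < q) (m : ℕ) (x : ℝ) :
    qnum q (m + x) = (1 - q ^ x * q ^ m) / (1 - q) := by
  rw [qnum, Real.rpow_add hq, Real.rpow_natCast, mul_comm]

theorem hasSum_neg_pow_mul_qnum_pow {q : ℝ} (hq0 : 0 < q) (hq1 : q < 1) (k : ℕ) (x : ℝ) :
    HasSum (fun m : ℕ ↦ (-q) ^ m * qnum q (m + x) ^ k)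
      ((∑ l ∈ Finset.range (k + 1),
        k.choose l * (-1) ^ l * q ^ (l * x) / (1 + q ^ (l + 1))) / (1 - q) ^ k) := by
  have norm_q_lt_one : ‖q‖ < 1 := by rwa [Real.norm_of_nonneg hq0.le]
  have rpow_mul_eq_pow (l : ℕ) : q ^ (l * x) = (q ^ x) ^ l := by
    rw [mul_comm, Real.rpow_mul_natCast hq0.le]
  have hasSum_scaled := (hasSum_pow_mul_one_sub_mul_pow_pow
    ((norm_neg q).trans_lt norm_q_lt_one) norm_q_lt_one.le (q ^ x) k).div_const ((1 - q) ^ k)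
  simpa only [qnum_natCast_add hq0, div_pow, mul_div_assoc, rpow_mul_eq_pow, neg_pow (q ^ x),
    mul_assoc, neg_mul, sub_neg_eq_add, pow_succ'] using hasSum_scaled

theorem qEuler_eq_sum {q : ℝ} (hq0 : 0 < q) (hq1 : q < 1) (k : ℕ) (x : ℝ) :
    qEuler q k x = (1 + q) * ((∑ l ∈ Finset.range (k + 1),
      k.choose l * (-1) ^ l * q ^ (l * x) / (1 + q ^ (l + 1))) / (1 - q) ^ k) := by
  rw [qEuler, (hasSum_neg_pow_mul_qnum_pow hq0 hq1 k x).tsum_eq]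

theorem carlitz_qChanghee_explicit_formula (q x : ℝ) (hq0 : 0 < q) (hq1 : q < 1) (n : ℕ) :
    qChanghee q n x = (1 + q) *
      ∑ k ∈ Finset.range (n + 1), ∑ l ∈ Finset.range (k + 1),
        (1 / (1 - q) ^ k) * (k.choose l : ℝ) * q ^ ((l : ℝ) * x) * (-1) ^ l *
          (S1 n k : ℝ) / (1 + q ^ (l + 1)) := by
  rw [qChanghee, Finset.mul_sum]
  refine Finset.sum_congr rfl fun k _ ↦ ?_
  rw [qEuler_eq_sum hq0 hq1, mul_left_comm, Finset.sum_div, Finset.mul_sum]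
  congr 1
  refine Finset.sum_congr rfl fun l _ ↦ ?_
  ring
end

section
/- Let 0 < q < 1 be real, let x be a real number, and let t be a real number with |t| < 1. Then the generating function identity (1+q) · Σ_{m=0}^{∞} (−q)^m (1+t)^{[m+x]_q} = Σ_{n=0}^{∞} Ch_{n,q}(x) · t^n/n! holds, both series being absolutely convergent; here (1+t)^a denotes the real power exp(a · log(1+t)). -/
/-!
By the binomial series `(1 + t) ^ a = ∑ n, Ring.choose a n * t ^ n`, both sides are iterated sums of
`(1 + q) * (-q) ^ m * Ring.choose [m + x]_q n * t ^ n` over `m` and `n`. Exchanging them is a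
matter of domination: the exponents `[m + x]_q` are bounded by a constant `C`, and
`|Ring.choose a n| ≤ |Ring.choose (-C) n|` for `|a| ≤ C`, so the double series is dominated by the
product of a geometric series and the binomial series with exponent `-C`.
-/

lemma add_one_mul_choose_succ {R : Type*} [Ring R] [BinomialRing R] (r : R) (n : ℕ) :
    ((n : R) + 1) * Ring.choose r (n + 1) = Ring.choose r n * (r - n) := by
  simpa [nsmul_eq_mul] using Ring.choose_smul_choose r n.le_succ

lemma norm_choose_le_abs_choose_neg {𝕜 : Type*} [RCLike 𝕜] {a : 𝕜} {C : ℝ} (ha : ‖a‖ ≤ C)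
    (n : ℕ) : ‖Ring.choose a n‖ ≤ |Ring.choose (-C) n| := by
  induction n with
  | zero => simp
  | succ n ih =>
    have hn : (0 : ℝ) < n + 1 := by positivity
    have hC : 0 ≤ C := (norm_nonneg a).trans ha
    have norm_add_one : ‖(n : 𝕜) + 1‖ = n + 1 := by
      exact_mod_cast RCLike.norm_natCast (K := 𝕜) (n + 1)
    have norm_factor_le : ‖a - n‖ ≤ |-C - n| := calc
      ‖a - n‖ ≤ ‖a‖ + ‖(n : 𝕜)‖ := norm_sub_le _ _
      _ ≤ C + n := by rw [RCLike.norm_natCast]; gcongr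
      _ = |-C - n| := by rw [← neg_add', abs_neg, abs_of_nonneg (by positivity)]
    refine le_of_mul_le_mul_left ?_ hn
    calc (n + 1 : ℝ) * ‖Ring.choose a (n + 1)‖
        = ‖Ring.choose a n‖ * ‖a - n‖ := by
          rw [← norm_add_one, ← norm_mul, add_one_mul_choose_succ, norm_mul]
      _ ≤ |Ring.choose (-C) n| * |-C - n| := by gcongr
      _ = (n + 1) * |Ring.choose (-C) (n + 1)| := by
          rw [← abs_mul, ← add_one_mul_choose_succ, abs_mul, abs_of_pos hn]

lemma hasSum_choose_mul_pow (a : ℝ) {t : ℝ} (ht : |t| < 1) :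
    HasSum (fun n : ℕ => Ring.choose a n * t ^ n) ((1 + t) ^ a) := by
  have mem_ball : t ∈ Metric.eball (0 : ℝ) 1 := by
    simpa [enorm_eq_nnnorm, ← NNReal.coe_lt_coe] using ht
  simpa [binomialSeries, mul_comm] using
    Real.one_add_rpow_hasFPowerSeriesOnBall_zero.hasSum mem_ball

section WeightedSums

variable {ι : Type*} {w a : ι → ℝ} {C t : ℝ}

lemma summable_mul_pow_of_abs_le (hw : Summable w) (ha : ∀ i, |a i| ≤ C) (k : ℕ) :
    Summable fun i => w i * a i ^ k := by
  refine (hw.abs.mul_right (C ^ k)).of_norm_bounded fun i => ?_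
  rw [Real.norm_eq_abs, abs_mul, abs_pow]
  gcongr
  exact ha i

lemma summable_mul_choose_mul_pow (hw : Summable w) (ha : ∀ i, |a i| ≤ C) (ht : |t| < 1) :
    Summable fun p : ι × ℕ => w p.1 * (Ring.choose (a p.1) p.2 * t ^ p.2) := by
  have dominating : Summable fun p : ι × ℕ => |w p.1| * |Ring.choose (-C) p.2 * t ^ p.2| :=
    hw.abs.mul_of_nonneg (hasSum_choose_mul_pow (-C) ht).summable.abs
      (fun _ => abs_nonneg _) fun _ => abs_nonneg _
  refine dominating.of_norm_bounded fun p => ?_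
  have choose_le : |Ring.choose (a p.1) p.2| ≤ |Ring.choose (-C) p.2| :=
    norm_choose_le_abs_choose_neg (𝕜 := ℝ) (ha p.1) p.2
  rw [Real.norm_eq_abs, abs_mul, abs_mul, abs_mul]
  gcongr ?_ * (?_ * _)

lemma summable_mul_one_add_rpow (hw : Summable w) (ha : ∀ i, |a i| ≤ C) (ht : |t| < 1) :
    Summable fun i => w i * (1 + t) ^ a i :=
  (summable_mul_choose_mul_pow hw ha ht).prod.congr fun i =>
    ((hasSum_choose_mul_pow (a i) ht).mul_left (w i)).tsum_eq

lemma hasSum_tsum_mul_choose_mul_pow (hw : Summable w) (ha : ∀ i, |a i| ≤ C) (ht : |t| < 1) :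
    HasSum (fun n : ℕ => (∑' i, w i * Ring.choose (a i) n) * t ^ n)
      (∑' i, w i * (1 + t) ^ a i) := by
  have double_sum : Summable
      (Function.uncurry fun (i : ι) (n : ℕ) => w i * (Ring.choose (a i) n * t ^ n)) :=
    summable_mul_choose_mul_pow hw ha ht
  have row (i : ι) : ∑' n : ℕ, w i * (Ring.choose (a i) n * t ^ n) = w i * (1 + t) ^ a i :=
    ((hasSum_choose_mul_pow (a i) ht).mul_left (w i)).tsum_eq
  have column (n : ℕ) : ∑' i, w i * (Ring.choose (a i) n * t ^ n) =
      (∑' i, w i * Ring.choose (a i) n) * t ^ n := by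
    simp only [← mul_assoc, tsum_mul_right]
  simp only [← row, ← column]
  rw [← double_sum.tsum_comm]
  exact double_sum.prod_symm.prod.hasSum

end WeightedSums

lemma sum_S1_mul_pow {R : Type*} [Ring R] [BinomialRing R] (r : R) (n : ℕ) :
    ∑ k ∈ Finset.range (n + 1), (S1 n k : R) * r ^ k = n.factorial • Ring.choose r n := by
  have degree_lt : (descPochhammer ℤ n).natDegree < n + 1 := by
    rw [descPochhammer_natDegree]
    exact n.lt_succ_self
  rw [← Ring.descPochhammer_eq_factorial_smul_choose, Polynomial.smeval_eq_sum,
    Polynomial.sum_over_range' _ (by simp [Polynomial.smul_pow]) _ degree_lt]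
  simp only [S1, Polynomial.smul_pow, zsmul_eq_mul]

section QAnalogue

variable {q : ℝ}

lemma abs_qnum_le (hq0 : 0 < q) (hq1 : q < 1) {x y : ℝ} (hxy : x ≤ y) :
    |qnum q y| ≤ (1 + q ^ x) / (1 - q) := by
  have one_sub_pos : 0 < 1 - q := sub_pos.2 hq1
  rw [qnum, abs_div, abs_of_pos one_sub_pos]
  gcongr
  calc |1 - q ^ y| ≤ |1| + |q ^ y| := abs_sub _ _
    _ = 1 + q ^ y := by rw [abs_one, abs_of_pos (Real.rpow_pos_of_pos hq0 y)]
    _ ≤ 1 + q ^ x := by grw [Real.rpow_le_rpow_of_exponent_ge hq0 hq1.le hxy]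

lemma abs_qnum_natCast_add_le (hq0 : 0 < q) (hq1 : q < 1) (x : ℝ) (m : ℕ) :
    |qnum q (m + x)| ≤ (1 + q ^ x) / (1 - q) :=
  abs_qnum_le hq0 hq1 (le_add_of_nonneg_left m.cast_nonneg)

lemma qChanghee_eq_tsum_choose (hq0 : 0 < q) (hq1 : q < 1) (n : ℕ) (x : ℝ) :
    qChanghee q n x =
      n.factorial * ((1 + q) * ∑' m : ℕ, (-q) ^ m * Ring.choose (qnum q (m + x)) n) := by
  have weights : Summable fun m : ℕ => (-q) ^ m :=
    summable_geometric_of_abs_lt_one (by rwa [abs_neg, abs_of_pos hq0])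
  have summable_term (k : ℕ) :
      Summable fun m : ℕ => (S1 n k : ℝ) * ((-q) ^ m * qnum q (m + x) ^ k) :=
    (summable_mul_pow_of_abs_le weights (abs_qnum_natCast_add_le hq0 hq1 x) k).mul_left _
  calc qChanghee q n x
      = (1 + q) * ∑ k ∈ Finset.range (n + 1),
          ∑' m : ℕ, (S1 n k : ℝ) * ((-q) ^ m * qnum q (m + x) ^ k) := by
        simp only [qChanghee, qEuler, tsum_mul_left, Finset.mul_sum, mul_left_comm]
    _ = (1 + q) * ∑' m : ℕ, (-q) ^ m *
          ∑ k ∈ Finset.range (n + 1), (S1 n k : ℝ) * qnum q (m + x) ^ k := by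
        rw [← Summable.tsum_finsetSum fun k _ => summable_term k]
        simp only [Finset.mul_sum, mul_left_comm]
    _ = n.factorial * ((1 + q) * ∑' m : ℕ, (-q) ^ m * Ring.choose (qnum q (m + x)) n) := by
        simp only [sum_S1_mul_pow, nsmul_eq_mul, mul_left_comm _ (n.factorial : ℝ), tsum_mul_left]

end QAnalogue

theorem qChanghee_generating_function (q x t : ℝ) (hq0 : 0 < q) (hq1 : q < 1)
    (ht : |t| < 1) :
    (Summable fun m : ℕ => |(-q) ^ m * (1 + t) ^ (qnum q ((m : ℝ) + x))|) ∧
    (Summable fun n : ℕ => |qChanghee q n x * t ^ n / (n.factorial : ℝ)|) ∧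
    (1 + q) * ∑' m : ℕ, (-q) ^ m * (1 + t) ^ (qnum q ((m : ℝ) + x)) =
      ∑' n : ℕ, qChanghee q n x * t ^ n / (n.factorial : ℝ) := by
  have weights : Summable fun m : ℕ => (-q) ^ m :=
    summable_geometric_of_abs_lt_one (by rwa [abs_neg, abs_of_pos hq0])
  have exponents := abs_qnum_natCast_add_le hq0 hq1 x
  have coefficient (n : ℕ) : qChanghee q n x * t ^ n / (n.factorial : ℝ) =
      (1 + q) * ((∑' m : ℕ, (-q) ^ m * Ring.choose (qnum q ((m : ℝ) + x)) n) * t ^ n) := by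
    rw [qChanghee_eq_tsum_choose hq0 hq1]
    field_simp
  have expansion := (hasSum_tsum_mul_choose_mul_pow weights exponents ht).mul_left (1 + q)
  simp only [summable_abs_iff, coefficient]
  exact ⟨summable_mul_one_add_rpow weights exponents ht, expansion.summable,
    expansion.tsum_eq.symm⟩
end

section
/- Let 0 < q < 1 be real and let x be a real number. For every integer n ≥ 0, the Carlitz type q-Changhee polynomial values satisfy the recurrence q · Ch_{n,q}(x+1) + Ch_{n,q}(x) = (1+q) · Σ_{l=0}^{n} S₁(n,l) [x]_q^l. -/
/-!
Splitting off the term `m = 0` of the series for `ℰ_{n,q}(x)` leaves `-q` times the series for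
`ℰ_{n,q}(x + 1)`, so `q ℰ_{n,q}(x + 1) + ℰ_{n,q}(x) = (1 + q) [x]_q^n`; the recurrence for
`Ch_{n,q}` is a linear combination of these identities. The splitting needs convergence, which holds
because `[m + x]_q` tends to `1 / (1 - q)` while `(-q)^m` decays geometrically.
-/

open Filter Topology

theorem tsum_pow_mul_eq_zero_add {R : Type*} [DivisionRing R] [TopologicalSpace R]
    [IsTopologicalRing R] [T2Space R] {r : R} {a : ℕ → R} (h : Summable fun m ↦ r ^ m * a m) :
    ∑' m, r ^ m * a m = a 0 + r * ∑' m, r ^ m * a (m + 1) := by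
  simp only [h.tsum_eq_zero_add, pow_zero, one_mul, pow_succ', mul_assoc, tsum_mul_left]

theorem tendsto_qnum_natCast_add {q : ℝ} (hq : q ≠ 0) (hq1 : |q| < 1) (x : ℝ) :
    Tendsto (fun m : ℕ ↦ qnum q (m + x)) atTop (𝓝 (1 / (1 - q))) := by
  have hpow (m : ℕ) : q ^ ((m : ℝ) + x) = q ^ x * q ^ m := by
    rw [add_comm, Real.rpow_add_natCast hq]
  have hzero : Tendsto (fun m : ℕ ↦ q ^ x * q ^ m) atTop (𝓝 0) := by
    simpa only [mul_zero] using (tendsto_pow_atTop_nhds_zero_of_abs_lt_one hq1).const_mul (q ^ x)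
  simpa only [qnum, hpow, sub_zero] using (hzero.const_sub 1).div_const (1 - q)

theorem summable_pow_mul_qnum_pow {q r : ℝ} (hq : q ≠ 0) (hq1 : |q| < 1) (hr1 : |r| < 1)
    (n : ℕ) (x : ℝ) : Summable fun m : ℕ ↦ r ^ m * qnum q (m + x) ^ n := by
  have hgeom : Summable fun m : ℕ ↦ ‖r ^ m‖ := summable_norm_geometric_of_norm_lt_one hr1
  have hlim := (tendsto_qnum_natCast_add hq hq1 x).pow n
  exact hgeom.mul_tendsto_const (Nat.cofinite_eq_atTop ▸ hlim)

theorem mul_qEuler_add_one_add_qEuler {q : ℝ} (hq : q ≠ 0) (hq1 : |q| < 1) (n : ℕ) (x : ℝ) :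
    q * qEuler q n (x + 1) + qEuler q n x = (1 + q) * qnum q x ^ n := by
  have hneg : |-q| < 1 := by rwa [abs_neg]
  have hsplit := tsum_pow_mul_eq_zero_add (summable_pow_mul_qnum_pow hq hq1 hneg n x)
  have hshift (m : ℕ) : ((m + 1 : ℕ) : ℝ) + x = m + (x + 1) := by push_cast; ring
  simp only [hshift, Nat.cast_zero, zero_add] at hsplit
  rw [qEuler, qEuler, hsplit]
  ring

/-- For `q < 0`, Mathlib's `q ^ x` is `|q| ^ x * cos (π * x)`, which agrees with the usual power at
integers `x` and still satisfies `q ^ (x + m) = q ^ x * q ^ m` for natural `m`. -/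
theorem qChanghee_recurrence_general {q : ℝ} (hq : q ≠ 0) (hq1 : |q| < 1) (n : ℕ) (x : ℝ) :
    q * qChanghee q n (x + 1) + qChanghee q n x =
      (1 + q) * ∑ l ∈ Finset.range (n + 1), (S1 n l : ℝ) * qnum q x ^ l := by
  simp only [qChanghee, Finset.mul_sum, ← Finset.sum_add_distrib]
  refine Finset.sum_congr rfl fun k _ ↦ ?_
  linear_combination (S1 n k : ℝ) * mul_qEuler_add_one_add_qEuler hq hq1 k x

theorem qChanghee_recurrence (q x : ℝ) (hq0 : 0 < q) (hq1 : q < 1) (n : ℕ) :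
    q * qChanghee q n (x + 1) + qChanghee q n x =
      (1 + q) * ∑ l ∈ Finset.range (n + 1), (S1 n l : ℝ) * (qnum q x) ^ l :=
  qChanghee_recurrence_general hq0.ne' (by rwa [abs_of_pos hq0]) n x
end

section
/- Let 0 < q < 1 be real, let x be a real number, and let r ≥ 1 be an integer. For every integer n ≥ 0, the absolutely convergent multiple series (1+q)^r · Σ_{(m₁,…,m_r) ∈ ℕ^r} (−q)^{m₁+⋯+m_r} · ∏_{j=0}^{n−1} ([m₁+⋯+m_r+x]_q − j) equals Σ_{k=0}^{n} S₁(n,k) ℰ^{(r)}_{k,q}(x); that is, the Carlitz type q-Changhee polynomial of order r, Ch^{(r)}_{n,q}(x), defined as the left-hand side, satisfies Ch^{(r)}_{n,q}(x) = Σ_{k=0}^{n} S₁(n,k) ℰ^{(r)}_{k,q}(x). -/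
/-- Higher-order Carlitz `q`-Euler polynomial value
`ℰ^{(r)}_{n,q}(x) = (1+q)^r ∑_{(m₁,…,m_r) ∈ ℕ^r} (-q)^{m₁+⋯+m_r} [m₁+⋯+m_r+x]_q^n`. -/
noncomputable def qEulerH (q : ℝ) (r n : ℕ) (x : ℝ) : ℝ :=
  (1 + q) ^ r * ∑' m : Fin r → ℕ,
    (-q) ^ (∑ i, m i) * (qnum q (((∑ i, m i : ℕ) : ℝ) + x)) ^ n

/-- Carlitz type `q`-Changhee polynomial of order `r`:
`Ch^{(r)}_{n,q}(x) = ∑_{k=0}^n S₁(n,k) ℰ^{(r)}_{k,q}(x)`. -/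
noncomputable def qChangheeH (q : ℝ) (r n : ℕ) (x : ℝ) : ℝ :=
  ∑ k ∈ Finset.range (n + 1), (S1 n k : ℝ) * qEulerH q r k x

/-!
For `0 < q < 1` the numbers `[m₁ + ⋯ + m_r + x]_q` stay bounded as `m` ranges over `ℕ^r`, while
`∑ (-q)^(m₁ + ⋯ + m_r)` converges absolutely, being a product of `r` geometric series. Hence all
moments of the sequence `[m₁ + ⋯ + m_r + x]_q` against these weights exist, and up to the factor
`(1 + q)^r` they are the `ℰ^{(r)}_{k,q}(x)`. Summation against the weights is therefore the linear
functional on polynomials sending `y ^ k` to `ℰ^{(r)}_{k,q}(x)`, and the theorem is its value at the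
falling factorial `y (y - 1) ⋯ (y - n + 1)`.
-/

open Finset Polynomial

section Summability

variable {ι : Type*} [Fintype ι]

theorem summable_prod_pi_of_nonneg {κ : ι → Type*} {f : ∀ i, κ i → ℝ}
    (hf₀ : ∀ i k, 0 ≤ f i k) (hf : ∀ i, Summable (f i)) :
    Summable fun m : ∀ i, κ i => ∏ i, f i (m i) := by
  classical
  refine summable_of_sum_le (c := ∏ i, ∑' k, f i k)
    (fun m => prod_nonneg fun i _ => hf₀ i (m i)) fun s => ?_
  -- Enlarging `s` to the box spanned by its projections makes the sum factor.
  let t : ∀ i, Finset (κ i) := fun i => s.image fun m => m i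
  have s_subset_box : s ⊆ Fintype.piFinset t := fun m hm =>
    Fintype.mem_piFinset.2 fun i => mem_image_of_mem (fun m => m i) hm
  calc ∑ m ∈ s, ∏ i, f i (m i)
      ≤ ∑ m ∈ Fintype.piFinset t, ∏ i, f i (m i) :=
        sum_le_sum_of_subset_of_nonneg s_subset_box
          fun m _ _ => prod_nonneg fun i _ => hf₀ i (m i)
    _ = ∏ i, ∑ k ∈ t i, f i k := (prod_univ_sum t f).symm
    _ ≤ ∏ i, ∑' k, f i k :=
        prod_le_prod (fun i _ => sum_nonneg fun k _ => hf₀ i k)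
          fun i _ => (hf i).sum_le_tsum (t i) fun k _ => hf₀ i k

theorem summable_norm_pow_sum_of_norm_lt_one {R : Type*} [NormedDivisionRing R] {a : R}
    (ha : ‖a‖ < 1) : Summable fun m : ι → ℕ => ‖a ^ ∑ i, m i‖ := by
  simp only [norm_pow, ← prod_pow_eq_pow_sum]
  exact summable_prod_pi_of_nonneg (fun _ k => pow_nonneg (norm_nonneg a) k)
    fun _ => summable_geometric_of_lt_one (norm_nonneg a) ha

end Summability

section Polynomial

theorem hasSum_mul_eval {ι R : Type*} [CommSemiring R] [TopologicalSpace R]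
    [IsTopologicalSemiring R] {w y : ι → R} {μ : ℕ → R}
    (hμ : ∀ k, HasSum (fun i => w i * y i ^ k) (μ k)) (p : R[X]) :
    HasSum (fun i => w i * p.eval (y i)) (p.sum fun k a => a * μ k) := by
  have expand_eval (i : ι) :
      w i * p.eval (y i) = ∑ k ∈ p.support, p.coeff k * (w i * y i ^ k) := by
    rw [eval_eq_sum, Polynomial.sum, mul_sum]
    exact sum_congr rfl fun k _ => mul_left_comm _ _ _
  simp only [expand_eval]
  exact hasSum_sum fun k _ => (hμ k).mul_left _

theorem descPochhammer_sum_eq_sum_S1 {R : Type*} [Ring R] (n : ℕ) (μ : ℕ → R) :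
    ((descPochhammer R n).sum fun k a => a * μ k) =
      ∑ k ∈ range (n + 1), (S1 n k : R) * μ k := by
  have natDegree_lt : (descPochhammer R n).natDegree < n + 1 := by
    rw [← descPochhammer_map (Int.castRingHom R), Nat.lt_succ_iff]
    exact natDegree_map_le.trans (descPochhammer_natDegree ℤ n).le
  have coeff_eq (k : ℕ) : (descPochhammer R n).coeff k = S1 n k := by
    rw [← descPochhammer_map (Int.castRingHom R), coeff_map, eq_intCast, S1]
  rw [sum_over_range' _ (fun k => zero_mul (μ k)) _ natDegree_lt]
  simp only [coeff_eq]

end Polynomial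

section QEuler

variable {q : ℝ}

theorem abs_qnum_le_of_le {x y : ℝ} (hq0 : 0 < q) (hq1 : q < 1) (hxy : x ≤ y) :
    |qnum q y| ≤ (1 + q ^ x) / (1 - q) := by
  have one_sub_pos : 0 < 1 - q := sub_pos.2 hq1
  rw [qnum, abs_div, abs_of_pos one_sub_pos]
  gcongr
  calc |1 - q ^ y| ≤ |1| + |q ^ y| := abs_sub _ _
    _ = 1 + q ^ y := by rw [abs_one, abs_of_pos (Real.rpow_pos_of_pos hq0 y)]
    _ ≤ 1 + q ^ x := by gcongr 1 + ?_; exact Real.rpow_le_rpow_of_exponent_ge hq0 hq1.le hxy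

theorem summable_neg_pow_sum_mul_qnum_pow {ι : Type*} [Fintype ι] (hq0 : 0 < q) (hq1 : q < 1)
    (x : ℝ) (k : ℕ) :
    Summable fun m : ι → ℕ =>
      (-q) ^ (∑ i, m i) * qnum q (((∑ i, m i : ℕ) : ℝ) + x) ^ k := by
  have norm_neg_lt_one : ‖-q‖ < 1 := by rwa [norm_neg, Real.norm_of_nonneg hq0.le]
  refine .of_norm_bounded ((summable_norm_pow_sum_of_norm_lt_one norm_neg_lt_one).mul_right
    (((1 + q ^ x) / (1 - q)) ^ k)) fun m => ?_
  rw [norm_mul, norm_pow (qnum _ _), Real.norm_eq_abs (qnum _ _)]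
  gcongr
  exact abs_qnum_le_of_le hq0 hq1 (le_add_of_nonneg_left (Nat.cast_nonneg _))

theorem hasSum_qEulerH (hq0 : 0 < q) (hq1 : q < 1) (r k : ℕ) (x : ℝ) :
    HasSum (fun m : Fin r → ℕ =>
      (1 + q) ^ r * (-q) ^ (∑ i, m i) * qnum q (((∑ i, m i : ℕ) : ℝ) + x) ^ k)
      (qEulerH q r k x) := by
  simp only [mul_assoc]
  exact (summable_neg_pow_sum_mul_qnum_pow hq0 hq1 x k).hasSum.mul_left _

theorem hasSum_qChangheeH (hq0 : 0 < q) (hq1 : q < 1) (r n : ℕ) (x : ℝ) :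
    HasSum (fun m : Fin r → ℕ => (1 + q) ^ r * ((-q) ^ (∑ i, m i) *
      ∏ j ∈ range n, (qnum q (((∑ i, m i : ℕ) : ℝ) + x) - (j : ℝ)))) (qChangheeH q r n x) := by
  simp only [← descPochhammer_eval_eq_prod_range, ← mul_assoc]
  rw [qChangheeH, ← descPochhammer_sum_eq_sum_S1]
  exact hasSum_mul_eval (fun k => hasSum_qEulerH hq0 hq1 r k x) (descPochhammer ℝ n)

end QEuler

theorem qChangheeH_eq_sum_stirling1_qEulerH (q x : ℝ) (hq0 : 0 < q) (hq1 : q < 1)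
    (r : ℕ) (hr : 1 ≤ r) (n : ℕ) :
    (Summable fun m : Fin r → ℕ =>
      |(-q) ^ (∑ i, m i) *
        ∏ j ∈ Finset.range n, (qnum q (((∑ i, m i : ℕ) : ℝ) + x) - (j : ℝ))|) ∧
    (1 + q) ^ r * (∑' m : Fin r → ℕ,
        (-q) ^ (∑ i, m i) *
          ∏ j ∈ Finset.range n, (qnum q (((∑ i, m i : ℕ) : ℝ) + x) - (j : ℝ))) =
      ∑ k ∈ Finset.range (n + 1), (S1 n k : ℝ) * qEulerH q r k x := by
  have hasSum := hasSum_qChangheeH hq0 hq1 r n x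
  have factor_ne_zero : (1 + q) ^ r ≠ 0 := by positivity
  exact ⟨((summable_mul_left_iff factor_ne_zero).1 hasSum.summable).abs,
    tsum_mul_left.symm.trans hasSum.tsum_eq⟩
end
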